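/- For all u ∈ ℍ and all t ≥ 1, with probability at least 1 − e^{−t}, |⟨L_r(E)θ_r, u⟩| ≤ C σ_r(Σ; u)(√(t/n) ∨ t/n) for an absolute constant C > 0. Moreover, if σ_r(Σ; u) > 0, then sup_{x ∈ ℝ} |ℙ{√n ⟨L_r(E)θ_r, u⟩ / σ_r(Σ; u) ≤ x} − Φ(x)| ≤ C' n^{−1/2} for an absolute constant C' > 0. -/

import Mathlib

open MeasureTheory ProbabilityTheory Filter Set
open scoped RealInnerProductSpace Topology NNReal ENNReal

noncomputable section

namespace KLN

variable {H : Type*} [NormedAddCommGroup H] [InnerProductSpace ℝ H] [CompleteSpace H]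

/-- Rank-one operator `x ⊗ y : w ↦ ⟪y, w⟫ • x`. -/
def outer (x y : H) : H →L[ℝ] H := (innerSL ℝ y).smulRight x

/-- Sample covariance of the sample `X`. -/
def sampleCov {n : ℕ} (X : Fin n → H) : H →L[ℝ] H :=
  (n : ℝ)⁻¹ • ∑ j : Fin n, outer (X j) (X j)

/-- Courant–Fischer: `lam A j` is the `(j+1)`-th largest eigenvalue of the
positive self-adjoint compact operator `A` (eigenvalues repeated with multiplicity). -/
def lam (A : H →L[ℝ] H) (j : ℕ) : ℝ :=
  ⨆ V : {V : Submodule ℝ H // Module.finrank ℝ V = j + 1},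
    ⨅ x : {x : H // x ∈ V.1 ∧ ‖x‖ = 1}, ⟪A x.1, x.1⟫

/-- `λ_δ(A) := max {λ ∈ A : (λ-δ, λ) ∩ A = ∅}`. -/
def lamDelta (δ : ℝ) (A : Set ℝ) : ℝ := sSup {l | l ∈ A ∧ Ioo (l - δ) l ∩ A = ∅}

/-- Top δ-cluster `T_δ(A) := A \ [0, λ_δ(A))`. -/
def topCluster (δ : ℝ) (A : Set ℝ) : Set ℝ := A \ Ico 0 (lamDelta δ A)

/-- Successive residual sets after removing top clusters. -/
def resid (δ : ℝ) (A : Set ℝ) : ℕ → Set ℝ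
  | 0 => A
  | k + 1 => resid δ A k \ topCluster δ (resid δ A k)

/-- `cluster δ A k` is the `(k+1)`-th δ-cluster `A_{k+1}` of `A`. -/
def cluster (δ : ℝ) (A : Set ℝ) (k : ℕ) : Set ℝ := topCluster δ (resid δ A k)

/-- The number of δ-clusters: `ν := min {j : A_{j+1} = ∅}`. -/
def nClusters (δ : ℝ) (A : Set ℝ) : ℕ := sInf {j | cluster δ A j = ∅}

/-- `σ(A) ∪ {0}`. -/
def spec0 (A : H →L[ℝ] H) : Set ℝ := spectrum ℝ A ∪ {0}

/-- Direct sum of the eigenspaces of `A` for eigenvalues in `c`. -/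
def clusterSpace (A : H →L[ℝ] H) (c : Set ℝ) : Submodule ℝ H :=
  ⨆ t ∈ c, Module.End.eigenspace (A : H →ₗ[ℝ] H) t

/-- `A` is self-adjoint, positive and nuclear (trace class). -/
def IsPosNuclear (A : H →L[ℝ] H) : Prop :=
  (∀ x y : H, ⟪A x, y⟫ = ⟪x, A y⟫) ∧ (∀ x : H, 0 ≤ ⟪A x, x⟫) ∧
    ∃ (ι : Type) (e : HilbertBasis ι ℝ H), Summable fun i => ⟪A (e i), e i⟫

/-- Nuclear norm of a self-adjoint `A`: `‖A‖₁ = ∑_j √(λ_j(A∘A))`. -/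
def nuclearNormSA (A : H →L[ℝ] H) : ℝ := ∑' j, Real.sqrt (lam (A.comp A) j)

/-- A covariance operator together with its spectral decomposition
`Σ = ∑_s μ_s P_s` where `μ 0 > μ 1 > ⋯ > 0` are the distinct eigenvalues (0-indexed;
zero projections `P s = 0` are allowed so that finite rank operators are covered)
and `P s` are the (finite rank, mutually orthogonal) spectral projections. -/
structure CovOp (H : Type*) [NormedAddCommGroup H] [InnerProductSpace ℝ H]
    [CompleteSpace H] where
  toCLM : H →L[ℝ] H
  μ : ℕ → ℝ
  P : ℕ → H →L[ℝ] H
  μ_pos : ∀ s, 0 < μ s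
  μ_anti : StrictAnti μ
  μ_lim : Tendsto μ atTop (nhds 0)
  P_symm : ∀ s (x y : H), ⟪P s x, y⟫ = ⟪x, P s y⟫
  P_idem : ∀ s (x : H), P s (P s x) = P s x
  P_orth : ∀ s t, s ≠ t → ∀ x : H, P s (P t x) = 0
  P_finrank : ∀ s, FiniteDimensional ℝ (LinearMap.range (P s).toLinearMap)
  μm_summable : Summable fun s =>
    μ s * (Module.finrank ℝ (LinearMap.range (P s).toLinearMap) : ℝ)
  decomp : ∀ x : H, HasSum (fun s => μ s • P s x) (toCLM x)

namespace CovOp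

/-- multiplicity `m_s` of `μ s`. -/
def m (S : CovOp H) (s : ℕ) : ℕ :=
  Module.finrank ℝ (LinearMap.range (S.P s).toLinearMap)

/-- `tr(Σ) = ∑_s μ_s m_s`. -/
def trace (S : CovOp H) : ℝ := ∑' s, S.μ s * (S.m s : ℝ)

/-- effective rank `r(Σ) = tr(Σ)/‖Σ‖`. -/
def effRank (S : CovOp H) : ℝ := S.trace / ‖S.toCLM‖

/-- spectral gap `g_r = dist(μ_r, σ(Σ) \ {μ_r})`. -/
def g (S : CovOp H) (r : ℕ) : ℝ :=
  Metric.infDist (S.μ r) (spectrum ℝ S.toCLM \ {S.μ r})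

/-- `ḡ_r = min_{s ≤ r} g_s`. -/
def gbar (S : CovOp H) (r : ℕ) : ℝ := ⨅ s : Fin (r + 1), S.g s

/-- `C_r x = ∑_{s ≠ r} (μ_r - μ_s)⁻¹ P_s x`. -/
def C (S : CovOp H) (r : ℕ) (x : H) : H :=
  ∑' s, (if s = r then 0 else (S.μ r - S.μ s)⁻¹) • S.P s x

/-- `σ_r²(Σ; u) = μ_r ⟨Σ C_r u, C_r u⟩`. -/
def sigmaSq (S : CovOp H) (r : ℕ) (u : H) : ℝ :=
  S.μ r * ⟪S.toCLM (S.C r u), S.C r u⟫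

/-- `Δ_r = {j : λ_j(Σ) = μ_r}` (eigenvalues `λ_j` with multiplicities, 0-indexed). -/
def Delta (S : CovOp H) (r : ℕ) : Set ℕ := {j | lam S.toCLM j = S.μ r}

/-- `μ r` is a simple eigenvalue with (unit) eigenvector `θ`, i.e. `P r = θ ⊗ θ`. -/
def SimpleVec (S : CovOp H) (r : ℕ) (θ : H) : Prop :=
  ‖θ‖ = 1 ∧ ∀ x : H, S.P r x = ⟪θ, x⟫ • θ

/-- `L_r(E) x = P_r E C_r x + C_r E P_r x`, with `P_r = θ ⊗ θ`. -/
def L (S : CovOp H) (r : ℕ) (θ : H) (E : H →L[ℝ] H) (x : H) : H :=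
  ⟪θ, E (S.C r x)⟫ • θ + S.C r (E (⟪θ, x⟫ • θ))

/-- the class `𝒮^{(r)}(rk, a, s0, u)`. -/
def memS (S : CovOp H) (r : ℕ) (u : H) (rk a s0 : ℝ) : Prop :=
  S.effRank ≤ rk ∧ ‖S.toCLM‖ / S.gbar r ≤ a ∧ s0 ^ 2 ≤ S.sigmaSq r u

/-- the open class `𝒮̊^{(r)}(rk, a, s0, u)`. -/
def memSo (S : CovOp H) (r : ℕ) (u : H) (rk a s0 : ℝ) : Prop :=
  S.effRank < rk ∧ ‖S.toCLM‖ / S.gbar r < a ∧ s0 ^ 2 < S.sigmaSq r u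

/-- `A_r(Σ) = 2 ∑_{s ≠ r} μ_r μ_s m_s / (μ_r - μ_s)²`. -/
def Ar (S : CovOp H) (r : ℕ) : ℝ :=
  2 * ∑' s, (if s = r then 0 else S.μ r * S.μ s * (S.m s : ℝ) / (S.μ r - S.μ s) ^ 2)

end CovOp

/-- `ν` is a centered Gaussian measure on `H` with covariance operator `A`. -/
def IsGaussian [MeasurableSpace H] (ν : Measure H) (A : H →L[ℝ] H) : Prop :=
  IsProbabilityMeasure ν ∧
    ∀ u : H, ν.map (fun x => ⟪x, u⟫) = gaussianReal 0 (Real.toNNReal ⟪A u, u⟫)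

/-- standard normal distribution function. -/
def Phi (x : ℝ) : ℝ := ((gaussianReal 0 1) (Iic x)).toReal

/-- `E ℓ(Z)`, `Z` standard normal. -/
def stdGaussExp (f : ℝ → ℝ) : ℝ := ∫ z, f z ∂(gaussianReal 0 1)

/-- Assumption 3.1 on the loss function. -/
structure IsLoss (f : ℝ → ℝ) (c₁ c₂ : ℝ) : Prop where
  c₁_pos : 0 < c₁
  c₂_pos : 0 < c₂
  nonneg : ∀ x, 0 ≤ f x
  zero : f 0 = 0
  even : ∀ x, f (-x) = f x
  mono : MonotoneOn f (Ici 0)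
  conv : ConvexOn ℝ (Ici 0) f
  bound : ∀ x, 0 ≤ x → f x ≤ c₁ * Real.exp (c₂ * x)

/-- the bias parameter `b_r = E⟨θ̂_r, θ_r⟩² - 1` for an estimator `est` based on a
sample of `k` i.i.d. observations from `ν`. -/
def biasParam [MeasurableSpace H] {k : ℕ} (ν : Measure H) (θ : H)
    (est : (Fin k → H) → H) : ℝ :=
  (∫ x, ⟪est x, θ⟫ ^ 2 ∂(Measure.pi fun _ : Fin k => ν)) - 1

/-- `est` is a valid selection of the estimator `θ̂_r^δ` with `δ = τ‖Σ̂‖`: a unit vector,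
aligned with `θ`, lying in the direct sum of eigenspaces of `Σ̂` for eigenvalues in the
`r`-th `δ`-cluster of `σ(Σ̂)` (whenever that space is nontrivial). -/
def clusterSel (r : ℕ) (θ : H) (τ : ℝ) {k : ℕ} (est : (Fin k → H) → H) : Prop :=
  ∀ x : Fin k → H,
    ‖est x‖ = 1 ∧ 0 ≤ ⟪est x, θ⟫ ∧
      (clusterSpace (sampleCov x) (cluster (τ * ‖sampleCov x‖) (spec0 (sampleCov x)) r) ≠ ⊥ →
        est x ∈ clusterSpace (sampleCov x) (cluster (τ * ‖sampleCov x‖) (spec0 (sampleCov x)) r))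

/-- `est` is a valid selection of the empirical eigenvector `θ̂_r`: a unit vector, aligned
with `θ`, which is an eigenvector of `Σ̂` for an eigenvalue `λ_j(Σ̂)` with `j ∈ Δ_r`
(whenever such an eigenvector exists). -/
def eigSel (S : CovOp H) (r : ℕ) (θ : H) {k : ℕ} (est : (Fin k → H) → H) : Prop :=
  ∀ x : Fin k → H,
    ‖est x‖ = 1 ∧ 0 ≤ ⟪est x, θ⟫ ∧
      ((∃ v : H, ‖v‖ = 1 ∧ ∃ j ∈ S.Delta r, sampleCov x v = lam (sampleCov x) j • v) →
        ∃ j ∈ S.Delta r, sampleCov x (est x) = lam (sampleCov x) j • est x)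

/-!
Since `⟨X, θ⟩` and `⟨X, C_r u⟩` are uncorrelated, `⟨L_r(E)θ, u⟩` is the empirical mean of the
products of the independent centred normal variables `⟨X_j, θ⟩` and `⟨X_j, C_r u⟩`, whose variances
multiply to `σ_r²(Σ; u)`. A product of two independent standard normals is sub-exponential, which
gives the deviation bound by Chernoff's method. For the normal approximation, condition on the
first factors `g`: the normalised sum becomes exactly `N(0, W)` with `W = n⁻¹ ∑ g_j²`. As `x φ(x)`
is bounded, `|ℙ(N(0, W) ≤ x) - Φ(x)| ≤ 2 |W - 1|`, and `E |W - 1| ≤ √(2 / n)` because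
`Var W = 2 / n`.
-/

/-! ### Functions of the covariance operator -/

namespace CovOp

/-- `T` is the operator `∑ₛ cₛ Pₛ`, a function of `Σ`, with the series converging pointwise.
It is a predicate on the plain map `T`, because `CovOp.C` is not bundled as an operator. -/
def IsMultiplier (S : CovOp H) (c : ℕ → ℝ) (T : H → H) : Prop :=
  ∀ x, HasSum (fun s => c s • S.P s x) (T x)

namespace IsMultiplier

variable {S : CovOp H} {c : ℕ → ℝ} {T : H → H}

lemma inner_symm (hT : S.IsMultiplier c T) (x y : H) : ⟪T x, y⟫ = ⟪x, T y⟫ := by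
  have hx := (hT x).mapL (innerSLFlip ℝ y)
  have hy := (hT y).mapL (innerSL ℝ x)
  simp only [innerSLFlip_apply_apply, innerSL_apply_apply, real_inner_smul_left,
    real_inner_smul_right, S.P_symm] at hx hy
  exact hx.unique hy

lemma inner_self_nonneg (hT : S.IsMultiplier c T) (hc : ∀ s, 0 ≤ c s) (x : H) :
    0 ≤ ⟪T x, x⟫ := by
  rw [real_inner_comm]
  refine ((hT x).mapL (innerSL ℝ x)).nonneg fun s => ?_
  rw [innerSL_apply_apply, inner_smul_right, ← S.P_idem, ← S.P_symm]
  exact mul_nonneg (hc s) real_inner_self_nonneg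

lemma apply_of_P_eq_self (hT : S.IsMultiplier c T) {r : ℕ} {θ : H} (hP : S.P r θ = θ) :
    T θ = c r • θ := by
  refine (hT θ).unique ?_
  convert hasSum_single r fun s hs => ?_ using 1
  · rw [hP]
  · rw [← hP, S.P_orth s r hs, smul_zero]

end IsMultiplier

variable (S : CovOp H)

lemma isMultiplier_toCLM : S.IsMultiplier S.μ S.toCLM := S.decomp

lemma isPositive_toCLM : S.toCLM.IsPositive :=
  (S.toCLM.isPositive_iff).2 ⟨S.isMultiplier_toCLM.inner_symm,
    S.isMultiplier_toCLM.inner_self_nonneg fun s => (S.μ_pos s).le⟩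

lemma orthogonalFamily_range_P :
    OrthogonalFamily ℝ (fun s => LinearMap.range (S.P s).toLinearMap)
      fun s => (LinearMap.range (S.P s).toLinearMap).subtypeₗᵢ := by
  rintro s t hst ⟨_, x, rfl⟩ ⟨_, y, rfl⟩
  exact (S.P_symm s x _).trans (by simp [S.P_orth s t hst])

lemma norm_sum_P_sq (x : H) (F : Finset ℕ) :
    ‖∑ s ∈ F, S.P s x‖ ^ 2 = ∑ s ∈ F, ‖S.P s x‖ ^ 2 :=
  S.orthogonalFamily_range_P.norm_sum (fun s => ⟨S.P s x, x, rfl⟩) F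

lemma inner_sum_P_self (x : H) (F : Finset ℕ) :
    ⟪∑ s ∈ F, S.P s x, x⟫ = ∑ s ∈ F, ‖S.P s x‖ ^ 2 := by
  rw [sum_inner]
  refine Finset.sum_congr rfl fun s _ => ?_
  rw [← real_inner_self_eq_norm_sq, S.P_symm, S.P_symm, S.P_idem]

lemma norm_sum_P_le (x : H) (F : Finset ℕ) : ‖∑ s ∈ F, S.P s x‖ ≤ ‖x‖ := by
  have h := real_inner_le_norm (∑ s ∈ F, S.P s x) x
  rw [inner_sum_P_self, ← norm_sum_P_sq, sq] at h
  by_contra! hlt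
  exact absurd h (not_le.2 (mul_lt_mul_of_pos_left hlt ((norm_nonneg x).trans_lt hlt)))

lemma summable_norm_P_sq (x : H) : Summable fun s => ‖S.P s x‖ ^ 2 := by
  refine summable_of_sum_le (c := ‖x‖ ^ 2) (fun _ => sq_nonneg _) fun F => ?_
  rw [← norm_sum_P_sq]
  gcongr
  exact S.norm_sum_P_le x F

lemma summable_smul_P {c : ℕ → ℝ} {B : ℝ} (hc : ∀ s, |c s| ≤ B) (x : H) :
    Summable fun s => c s • S.P s x := by
  refine (S.orthogonalFamily_range_P.summable_iff_norm_sq_summable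
    fun s => ⟨c s • S.P s x, c s • x, map_smul _ _ _⟩).2 ?_
  refine .of_nonneg_of_le (fun _ => sq_nonneg _) (fun s => ?_)
    ((S.summable_norm_P_sq x).mul_left (B ^ 2))
  rw [← mul_pow]
  simp only [Submodule.coe_norm, norm_smul, Real.norm_eq_abs]
  gcongr
  exact hc s

/-- The coefficient `(μ_r - μ_s)⁻¹` (`0` for `s = r`) of `P_s` in `C_r`. -/
def invGap (r s : ℕ) : ℝ := if s = r then 0 else (S.μ r - S.μ s)⁻¹

lemma exists_abs_invGap_le (r : ℕ) : ∃ B, ∀ s, |S.invGap r s| ≤ B := by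
  have hlim : Tendsto (S.invGap r) atTop (𝓝 (S.μ r - 0)⁻¹) := by
    refine ((tendsto_const_nhds.sub S.μ_lim).inv₀ ?_).congr' ?_
    · rw [sub_zero]
      exact (S.μ_pos r).ne'
    · filter_upwards [eventually_gt_atTop r] with s hs
      exact (if_neg hs.ne').symm
  obtain ⟨B, hB⟩ := hlim.abs.bddAbove_range
  exact ⟨B, fun s => hB ⟨s, rfl⟩⟩

lemma isMultiplier_C (r : ℕ) : S.IsMultiplier (S.invGap r) (S.C r) := fun x =>
  let ⟨_, hB⟩ := S.exists_abs_invGap_le r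
  (S.summable_smul_P hB x).hasSum

variable {S} {r : ℕ} {θ : H}

lemma C_of_P_eq_self (hP : S.P r θ = θ) : S.C r θ = 0 := by
  rw [(S.isMultiplier_C r).apply_of_P_eq_self hP, invGap, if_pos rfl, zero_smul]

lemma toCLM_of_P_eq_self (hP : S.P r θ = θ) : S.toCLM θ = S.μ r • θ :=
  S.isMultiplier_toCLM.apply_of_P_eq_self hP

lemma inner_C_of_P_eq_self (hP : S.P r θ = θ) (u : H) : ⟪θ, S.C r u⟫ = 0 := by
  rw [← (S.isMultiplier_C r).inner_symm, C_of_P_eq_self hP, inner_zero_left]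

lemma SimpleVec.P_apply_self (h : S.SimpleVec r θ) : S.P r θ = θ := by
  rw [h.2, real_inner_self_eq_norm_sq, h.1, one_pow, one_smul]

end CovOp

/-- The empirical mean of the products of the two entries of each pair. -/
def meanProd {n : ℕ} (p : Fin n → ℝ × ℝ) : ℝ := (n : ℝ)⁻¹ * ∑ j, (p j).1 * (p j).2

@[fun_prop]
lemma measurable_meanProd {n : ℕ} : Measurable (meanProd (n := n)) := by
  unfold meanProd
  fun_prop

lemma meanProd_mul_mul {n : ℕ} (a b : ℝ) (p : Fin n → ℝ × ℝ) :
    meanProd (fun j => (a * (p j).1, b * (p j).2)) = a * b * meanProd p := by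
  simp only [meanProd, Finset.mul_sum]
  exact Finset.sum_congr rfl fun j _ => by ring

lemma inner_sampleCov {E : Type*} [NormedAddCommGroup E] [InnerProductSpace ℝ E] {n : ℕ}
    (x : Fin n → E) (v w : E) :
    ⟪sampleCov x v, w⟫ = meanProd fun j => (⟪x j, v⟫, ⟪x j, w⟫) := by
  simp only [sampleCov, meanProd, outer, _root_.smul_apply, _root_.sum_apply,
    ContinuousLinearMap.smulRight_apply, innerSL_apply_apply, real_inner_smul_left, sum_inner]

lemma CovOp.inner_L_sampleCov_sub {S : CovOp H} {r : ℕ} {θ : H} (hθ : ‖θ‖ = 1)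
    (hP : S.P r θ = θ) {n : ℕ} (x : Fin n → H) (u : H) :
    ⟪S.L r θ (sampleCov x - S.toCLM) θ, u⟫ =
      meanProd fun j => (⟪x j, θ⟫, ⟪x j, S.C r u⟫) := by
  have hL : S.L r θ (sampleCov x - S.toCLM) θ = S.C r ((sampleCov x - S.toCLM) θ) := by
    simp [L, C_of_P_eq_self hP, hθ]
  rw [hL, (S.isMultiplier_C r).inner_symm, _root_.sub_apply, inner_sub_left,
    toCLM_of_P_eq_self hP, real_inner_smul_left, inner_C_of_P_eq_self hP, mul_zero, sub_zero,
    inner_sampleCov]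

/-! ### Gaussian vectors -/

section GaussianVector

variable {E : Type*} [NormedAddCommGroup E] [InnerProductSpace ℝ E] [MeasurableSpace E]
  [BorelSpace E] {ν : Measure E} {A : E →L[ℝ] E}

namespace IsGaussian

lemma hasLaw_inner (hν : IsGaussian ν A) (v : E) :
    HasLaw (fun x => ⟪x, v⟫) (gaussianReal 0 ⟪A v, v⟫.toNNReal) ν :=
  ⟨by fun_prop, hν.2 v⟩

lemma hasGaussianLaw_inner (hν : IsGaussian ν A) (v : E) :
    HasGaussianLaw (fun x => ⟪x, v⟫) ν :=
  (hν.hasLaw_inner v).hasGaussianLaw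

lemma hasGaussianLaw_inner_prodMk (hν : IsGaussian ν A) (v w : E) :
    HasGaussianLaw (fun x => (⟪x, v⟫, ⟪x, w⟫)) ν := by
  refine ⟨isGaussian_of_map_eq_gaussianReal fun ℓ => ?_⟩
  have hℓ : ℓ ∘ (fun x => (⟪x, v⟫, ⟪x, w⟫)) = fun x => ⟪x, ℓ (1, 0) • v + ℓ (0, 1) • w⟫ := by
    ext x
    have hx : (⟪x, v⟫, ⟪x, w⟫) = ⟪x, v⟫ • ((1 : ℝ), (0 : ℝ)) + ⟪x, w⟫ • ((0 : ℝ), (1 : ℝ)) := by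
      simp
    rw [Function.comp_apply, hx, map_add, map_smul, map_smul, inner_add_right,
      real_inner_smul_right, real_inner_smul_right, smul_eq_mul, smul_eq_mul, mul_comm (ℓ _),
      mul_comm (ℓ _)]
  rw [Measure.map_map (by fun_prop) (by fun_prop), hℓ]
  exact ⟨_, _, hν.2 _⟩

lemma variance_inner (hν : IsGaussian ν A) (hA : A.IsPositive) (v : E) :
    Var[fun x => ⟪x, v⟫; ν] = ⟪A v, v⟫ := by
  rw [(hν.hasLaw_inner v).variance_eq, variance_id_gaussianReal,
    Real.coe_toNNReal _ (hA.inner_nonneg_left v)]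

lemma covariance_inner (hν : IsGaussian ν A) (hA : A.IsPositive) (v w : E) :
    cov[fun x => ⟪x, v⟫, fun x => ⟪x, w⟫; ν] = ⟪A v, w⟫ := by
  have := hν.1
  have hvar := variance_fun_add (hν.hasGaussianLaw_inner v).memLp_two
    (hν.hasGaussianLaw_inner w).memLp_two
  have hsymm : ⟪A w, v⟫ = ⟪A v, w⟫ := (hA.isSymmetric w v).trans (real_inner_comm _ _)
  simp only [← inner_add_right, hν.variance_inner hA, map_add, inner_add_left] at hvar
  rw [inner_add_right, inner_add_right, hsymm] at hvar
  linarith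

lemma indepFun_inner (hν : IsGaussian ν A) (hA : A.IsPositive) {v w : E} (hvw : ⟪A v, w⟫ = 0) :
    (fun x => ⟪x, v⟫) ⟂ᵢ[ν] (fun x => ⟪x, w⟫) :=
  (hν.hasGaussianLaw_inner_prodMk v w).indepFun_of_covariance_eq_zero
    ((hν.covariance_inner hA v w).trans hvw)

end IsGaussian

lemma hasLaw_sqrt_mul_gaussianReal (q : ℝ) :
    HasLaw (fun x => √q * x) (gaussianReal 0 q.toNNReal) (gaussianReal 0 1) := by
  refine ⟨by fun_prop, ?_⟩
  rw [gaussianReal_map_const_mul, mul_zero, mul_one]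
  congr 1
  ext
  simp [Real.sq_sqrt']

lemma IsGaussian.identDistrib_inner_prodMk (hν : IsGaussian ν A) (hA : A.IsPositive) {v w : E}
    (hvw : ⟪A v, w⟫ = 0) :
    IdentDistrib (fun x => (⟪x, v⟫, ⟪x, w⟫)) (fun p : ℝ × ℝ => (√⟪A v, v⟫ * p.1, √⟪A w, w⟫ * p.2))
      ν ((gaussianReal 0 1).prod (gaussianReal 0 1)) := by
  have := hν.1
  refine .prodMk ?_ ?_ (hν.indepFun_inner hA hvw) (indepFun_prod (by fun_prop) (by fun_prop))
  · exact (hν.hasLaw_inner v).identDistrib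
      ((hasLaw_sqrt_mul_gaussianReal _).fun_comp measurePreserving_fst.hasLaw)
  · exact (hν.hasLaw_inner w).identDistrib
      ((hasLaw_sqrt_mul_gaussianReal _).fun_comp measurePreserving_snd.hasLaw)

end GaussianVector

lemma identDistrib_pi {ι : Type*} [Fintype ι] {Ω Ω' F : ι → Type*} [∀ i, MeasurableSpace (Ω i)]
    [∀ i, MeasurableSpace (Ω' i)] [∀ i, MeasurableSpace (F i)] {μ : ∀ i, Measure (Ω i)}
    {μ' : ∀ i, Measure (Ω' i)} [∀ i, IsFiniteMeasure (μ i)] [∀ i, IsFiniteMeasure (μ' i)]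
    {X : ∀ i, Ω i → F i} {Y : ∀ i, Ω' i → F i}
    (h : ∀ i, IdentDistrib (X i) (Y i) (μ i) (μ' i)) :
    IdentDistrib (fun x i => X i (x i)) (fun y i => Y i (y i)) (Measure.pi μ) (Measure.pi μ') where
  aemeasurable_fst := aemeasurable_pi_lambda _ fun i =>
    (h i).aemeasurable_fst.comp_quasiMeasurePreserving (Measure.quasiMeasurePreserving_eval _ i)
  aemeasurable_snd := aemeasurable_pi_lambda _ fun i =>
    (h i).aemeasurable_snd.comp_quasiMeasurePreserving (Measure.quasiMeasurePreserving_eval _ i)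
  map_eq := by
    rw [Measure.pi_map_pi fun i => (h i).aemeasurable_fst,
      Measure.pi_map_pi fun i => (h i).aemeasurable_snd]
    simp only [(h _).map_eq]

/-- The law of `n` independent pairs of independent standard normal variables, the model to which
`⟨L_r(E)θ_r, u⟩` is reduced. -/
abbrev gaussianPairs (n : ℕ) : Measure (Fin n → ℝ × ℝ) :=
  .pi fun _ => (gaussianReal 0 1).prod (gaussianReal 0 1)

lemma CovOp.identDistrib_inner_L [MeasurableSpace H] [BorelSpace H] {S : CovOp H} {r : ℕ} {θ : H}
    (hθ : ‖θ‖ = 1) (hP : S.P r θ = θ) {ν : Measure H} (hν : IsGaussian ν S.toCLM) (n : ℕ) (u : H) :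
    IdentDistrib (fun x : Fin n → H => ⟪S.L r θ (sampleCov x - S.toCLM) θ, u⟫)
      (fun p => √(S.sigmaSq r u) * meanProd p) (.pi fun _ => ν) (gaussianPairs n) := by
  have := hν.1
  have huncorr : ⟪S.toCLM θ, S.C r u⟫ = 0 := by
    rw [toCLM_of_P_eq_self hP, real_inner_smul_left, inner_C_of_P_eq_self hP, mul_zero]
  have hvar : ⟪S.toCLM θ, θ⟫ = S.μ r := by
    rw [toCLM_of_P_eq_self hP, real_inner_smul_left, real_inner_self_eq_norm_sq, hθ, one_pow,
      mul_one]
  have h := (identDistrib_pi fun _ : Fin n =>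
    hν.identDistrib_inner_prodMk S.isPositive_toCLM huncorr).comp measurable_meanProd
  simpa only [Function.comp_def, meanProd_mul_mul, hvar, ← Real.sqrt_mul (S.μ_pos r).le,
    ← inner_L_sampleCov_sub hθ hP, sigmaSq] using h

/-! ### Sub-exponential variables -/

section Subexponential

variable {Ω : Type*} [MeasurableSpace Ω] {P : Measure Ω} {X : Ω → ℝ} {c b : ℝ}

/-- `X` is sub-exponential: its moment generating function is at most that of a centred Gaussian
of variance `c` on the interval `[-b, b]`. It is the local version of `HasSubgaussianMGF`. -/
structure HasSubexponentialMGF (X : Ω → ℝ) (c b : ℝ) (P : Measure Ω) : Prop where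
  integrable_exp_mul : ∀ l, |l| ≤ b → Integrable (fun ω => Real.exp (l * X ω)) P
  mgf_le : ∀ l, |l| ≤ b → mgf X P l ≤ Real.exp (c * l ^ 2 / 2)

namespace HasSubexponentialMGF

lemma const_mul (h : HasSubexponentialMGF X c b P) {a : ℝ} (ha : 0 < a) :
    HasSubexponentialMGF (fun ω => a * X ω) (a ^ 2 * c) (b / a) P where
  integrable_exp_mul l hl := by
    simpa only [mul_assoc] using h.integrable_exp_mul (l * a)
      (by rwa [abs_mul, abs_of_pos ha, ← le_div_iff₀ ha])
  mgf_le l hl := by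
    refine (mgf_const_mul a).trans_le ((h.mgf_le (a * l) ?_).trans_eq (by ring_nf))
    rwa [abs_mul, abs_of_pos ha, ← le_div_iff₀' ha]

lemma neg (h : HasSubexponentialMGF X c b P) : HasSubexponentialMGF (-X) c b P where
  integrable_exp_mul l hl := by simpa using h.integrable_exp_mul (-l) (by rwa [abs_neg])
  mgf_le l hl := by simpa [mgf_neg] using h.mgf_le (-l) (by rwa [abs_neg])

lemma comp_measurePreserving (h : HasSubexponentialMGF X c b P) {Ω' : Type*}
    [MeasurableSpace Ω'] {Q : Measure Ω'} {f : Ω' → Ω} (hf : MeasurePreserving f Q P) :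
    HasSubexponentialMGF (X ∘ f) c b Q where
  integrable_exp_mul l hl := hf.integrable_comp_of_integrable (h.integrable_exp_mul l hl)
  mgf_le l hl := by
    have : mgf (X ∘ f) Q l = mgf X P l := by
      have := (h.integrable_exp_mul l hl).1
      rw [← hf.map_eq] at this ⊢
      exact (integral_map hf.aemeasurable this).symm
    exact this.trans_le (h.mgf_le l hl)

lemma sum_of_iIndepFun {ι : Type*} {X : ι → Ω → ℝ} {c : ι → ℝ} (hind : iIndepFun X P)
    (hmeas : ∀ i, Measurable (X i)) {s : Finset ι}
    (h : ∀ i ∈ s, HasSubexponentialMGF (X i) (c i) b P) :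
    HasSubexponentialMGF (∑ i ∈ s, X i) (∑ i ∈ s, c i) b P where
  integrable_exp_mul l hl := by
    have := hind.isProbabilityMeasure
    exact hind.integrable_exp_mul_sum hmeas fun i hi => (h i hi).integrable_exp_mul l hl
  mgf_le l hl := by
    rw [hind.mgf_sum hmeas, Finset.sum_mul, Finset.sum_div, Real.exp_sum]
    exact Finset.prod_le_prod (fun _ _ => mgf_nonneg) fun i hi => (h i hi).mgf_le l hl

lemma measureReal_ge_le [IsFiniteMeasure P] (h : HasSubexponentialMGF X c b P) (hc : 0 < c)
    (hb : 0 ≤ b) {ε : ℝ} (hε : 0 ≤ ε) :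
    P.real {ω | ε ≤ X ω} ≤ Real.exp (-(min (ε ^ 2 / c) (b * ε) / 2)) := by
  -- Chernoff's bound at the minimiser `ε / c` of `c * l ^ 2 / 2 - l * ε`, truncated at `b`.
  obtain ⟨l, hl⟩ : ∃ l, l = min (ε / c) b := ⟨_, rfl⟩
  have hl0 : 0 ≤ l := hl ▸ le_min (by positivity) hb
  have hlb : |l| ≤ b := (abs_of_nonneg hl0).trans_le (hl ▸ min_le_right _ _)
  have hlc : c * l ≤ ε := (le_div_iff₀' hc).1 (hl ▸ min_le_left _ _)
  have hmin : min (ε ^ 2 / c) (b * ε) = l * ε := by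
    rw [hl, min_mul_of_nonneg _ _ hε]
    ring_nf
  calc P.real {ω | ε ≤ X ω}
      ≤ Real.exp (-l * ε) * mgf X P l :=
        measure_ge_le_exp_mul_mgf ε hl0 (h.integrable_exp_mul l hlb)
    _ ≤ Real.exp (-l * ε) * Real.exp (c * l ^ 2 / 2) := by gcongr; exact h.mgf_le l hlb
    _ ≤ Real.exp (-(min (ε ^ 2 / c) (b * ε) / 2)) := by
        rw [← Real.exp_add, hmin, Real.exp_le_exp]
        linarith [mul_le_mul_of_nonneg_right hlc hl0]

lemma measureReal_abs_ge_le [IsFiniteMeasure P] (h : HasSubexponentialMGF X c b P) (hc : 0 < c)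
    (hb : 0 ≤ b) {ε : ℝ} (hε : 0 ≤ ε) :
    P.real {ω | ε ≤ |X ω|} ≤ 2 * Real.exp (-(min (ε ^ 2 / c) (b * ε) / 2)) := by
  have hunion : {ω | ε ≤ |X ω|} = {ω | ε ≤ X ω} ∪ {ω | ε ≤ (-X) ω} := by
    ext ω
    exact le_abs (a := ε) (b := X ω)
  rw [hunion, two_mul]
  exact (measureReal_union_le _ _).trans
    (add_le_add (h.measureReal_ge_le hc hb hε) (h.neg.measureReal_ge_le hc hb hε))

lemma one_sub_exp_neg_le_measureReal [IsProbabilityMeasure P] (h : HasSubexponentialMGF X c b P)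
    (hX : Measurable X) (hc : 0 < c) (hb : 0 ≤ b) {ε t : ℝ} (hε : 0 ≤ ε) (ht : Real.log 2 ≤ t)
    (htε : 4 * t ≤ min (ε ^ 2 / c) (b * ε)) :
    1 - Real.exp (-t) ≤ P.real {ω | |X ω| ≤ ε} := by
  have hcompl : P.real {ω | |X ω| ≤ ε}ᶜ ≤ Real.exp (-t) :=
    calc P.real {ω | |X ω| ≤ ε}ᶜ
        ≤ P.real {ω | ε ≤ |X ω|} := measureReal_mono fun ω (hω : ¬|X ω| ≤ ε) => (not_le.1 hω).le
      _ ≤ 2 * Real.exp (-(min (ε ^ 2 / c) (b * ε) / 2)) := h.measureReal_abs_ge_le hc hb hε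
      _ ≤ Real.exp t * Real.exp (-(2 * t)) := by
          gcongr
          · exact (Real.log_le_iff_le_exp two_pos).1 ht
          · linarith
      _ = Real.exp (-t) := by rw [← Real.exp_add]; ring_nf
  rw [probReal_compl_eq_one_sub (measurableSet_le (by fun_prop) (by fun_prop))] at hcompl
  linarith

end HasSubexponentialMGF

end Subexponential

/-! ### Products of independent standard normals -/

lemma integrable_gaussianReal_iff {f : ℝ → ℝ} :
    Integrable f (gaussianReal 0 1) ↔ Integrable (fun x => gaussianPDFReal 0 1 x * f x) := by
  rw [gaussianReal_of_var_ne_zero _ one_ne_zero, integrable_withDensity_iff_integrable_smul'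
    (measurable_gaussianPDF _ _) (ae_of_all _ fun _ => gaussianPDF_lt_top)]
  simp only [toReal_gaussianPDF, smul_eq_mul]

lemma gaussianPDFReal_mul_exp_sq (a x : ℝ) :
    gaussianPDFReal 0 1 x * Real.exp (a / 2 * x ^ 2) =
      (√(2 * Real.pi))⁻¹ * Real.exp (-((1 - a) / 2) * x ^ 2) := by
  simp only [gaussianPDFReal, NNReal.coe_one, mul_one, sub_zero]
  rw [mul_assoc, ← Real.exp_add]
  ring_nf

lemma integrable_exp_mul_sq_gaussianReal {a : ℝ} (ha : a < 1) :
    Integrable (fun x => Real.exp (a / 2 * x ^ 2)) (gaussianReal 0 1) := by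
  simp only [integrable_gaussianReal_iff, gaussianPDFReal_mul_exp_sq]
  exact (integrable_exp_neg_mul_sq (by linarith)).const_mul _

lemma integral_exp_mul_sq_gaussianReal {a : ℝ} (ha : a < 1) :
    ∫ x, Real.exp (a / 2 * x ^ 2) ∂(gaussianReal 0 1) = (√(1 - a))⁻¹ := by
  have ha' : 1 - a ≠ 0 := by linarith
  simp only [integral_gaussianReal_eq_integral_smul one_ne_zero, smul_eq_mul,
    gaussianPDFReal_mul_exp_sq]
  rw [integral_const_mul, integral_gaussian, ← Real.sqrt_inv, ← Real.sqrt_mul (by positivity),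
    ← Real.sqrt_inv]
  congr 1
  field_simp

lemma integral_exp_mul_mul_gaussianReal (l x : ℝ) :
    ∫ y, Real.exp (l * (x * y)) ∂(gaussianReal 0 1) = Real.exp (l ^ 2 / 2 * x ^ 2) := by
  have h := congrFun (mgf_fun_id_gaussianReal (μ := 0) (v := 1)) (l * x)
  simp only [mgf, mul_assoc] at h
  rw [h]
  congr 1
  push_cast
  ring

lemma integrable_exp_mul_mul_gaussianReal_prod {l : ℝ} (hl : l ^ 2 < 1) :
    Integrable (fun p : ℝ × ℝ => Real.exp (l * (p.1 * p.2)))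
      ((gaussianReal 0 1).prod (gaussianReal 0 1)) := by
  rw [integrable_prod_iff (by fun_prop)]
  constructor
  · refine ae_of_all _ fun x => ?_
    simp only [← mul_assoc]
    exact integrable_exp_mul_gaussianReal _
  · simp only [Real.norm_eq_abs, Real.abs_exp, integral_exp_mul_mul_gaussianReal]
    exact integrable_exp_mul_sq_gaussianReal hl

lemma mgf_mul_gaussianReal_prod {l : ℝ} (hl : l ^ 2 < 1) :
    mgf (fun p : ℝ × ℝ => p.1 * p.2) ((gaussianReal 0 1).prod (gaussianReal 0 1)) l =
      (√(1 - l ^ 2))⁻¹ := by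
  rw [mgf, integral_prod _ (integrable_exp_mul_mul_gaussianReal_prod hl)]
  simp only [integral_exp_mul_mul_gaussianReal, integral_exp_mul_sq_gaussianReal hl]

lemma inv_sqrt_one_sub_le_exp {a : ℝ} (ha₀ : 0 ≤ a) (ha : a ≤ 1 / 2) :
    (√(1 - a))⁻¹ ≤ Real.exp a := by
  have hone : 1 ≤ (1 - a) * Real.exp a ^ 2 :=
    calc 1 ≤ (1 - a) * (2 * a + 1) := by nlinarith
      _ ≤ (1 - a) * Real.exp (2 * a) := by
          gcongr
          · linarith
          · exact Real.add_one_le_exp _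
      _ = (1 - a) * Real.exp a ^ 2 := by rw [← Real.exp_nat_mul]; norm_num
  refine (inv_le_iff_one_le_mul₀' (Real.sqrt_pos.2 (by linarith))).2 ?_
  rw [← Real.sqrt_sq (Real.exp_pos a).le, ← Real.sqrt_mul (by linarith)]
  exact Real.one_le_sqrt.2 hone

lemma hasSubexponentialMGF_mul_gaussianReal_prod :
    HasSubexponentialMGF (fun p : ℝ × ℝ => p.1 * p.2) 2 (1 / 2)
      ((gaussianReal 0 1).prod (gaussianReal 0 1)) := by
  have hsq {l : ℝ} (hl : |l| ≤ 1 / 2) : l ^ 2 ≤ 1 / 4 :=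
    (sq_abs l).symm.trans_le ((pow_le_pow_left₀ (abs_nonneg l) hl 2).trans_eq (by norm_num))
  refine ⟨fun l hl => integrable_exp_mul_mul_gaussianReal_prod ((hsq hl).trans_lt (by norm_num)),
    fun l hl => ?_⟩
  rw [mgf_mul_gaussianReal_prod ((hsq hl).trans_lt (by norm_num)),
    mul_div_cancel_left₀ _ two_ne_zero]
  exact inv_sqrt_one_sub_le_exp (sq_nonneg l) ((hsq hl).trans (by norm_num))

lemma hasSubexponentialMGF_meanProd {n : ℕ} (hn : 0 < n) :
    HasSubexponentialMGF meanProd (2 / n) (n / 2) (gaussianPairs n) := by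
  have hn' : (0 : ℝ) < n := Nat.cast_pos.2 hn
  have hind : iIndepFun (fun (j : Fin n) (p : Fin n → ℝ × ℝ) => (p j).1 * (p j).2)
      (gaussianPairs n) :=
    iIndepFun_pi (X := fun _ (q : ℝ × ℝ) => q.1 * q.2) fun _ => by fun_prop
  have hsum := HasSubexponentialMGF.sum_of_iIndepFun hind (fun _ => by fun_prop)
    (s := Finset.univ) fun j _ => hasSubexponentialMGF_mul_gaussianReal_prod.comp_measurePreserving
      (measurePreserving_eval _ j)
  convert hsum.const_mul (inv_pos.2 hn') using 1
  · ext p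
    simp [meanProd]
  · simp
    field_simp
  · field_simp

theorem one_sub_exp_neg_le_measureReal_meanProd {n : ℕ} (hn : 0 < n) {t : ℝ}
    (ht : Real.log 2 ≤ t) :
    1 - Real.exp (-t) ≤
      (gaussianPairs n).real {p | |meanProd p| ≤ 8 * max √(t / n) (t / n)} := by
  have hn' : (0 : ℝ) < n := Nat.cast_pos.2 hn
  have ht₀ : 0 < t := (Real.log_pos one_lt_two).trans_le ht
  have hsq : t / n ≤ max √(t / n) (t / n) ^ 2 := Real.sqrt_le_iff.1 (le_max_left _ _) |>.2
  have hlin : t / n ≤ max √(t / n) (t / n) := le_max_right _ _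
  rw [div_le_iff₀' hn'] at hsq hlin
  refine (hasSubexponentialMGF_meanProd hn).one_sub_exp_neg_le_measureReal measurable_meanProd
    (by positivity) (by positivity) (by positivity) ht (le_min ?_ (by linarith))
  rw [le_div_iff₀ (by positivity)]
  field_simp
  linarith

/-! ### The normal distribution function under scaling -/

lemma Phi_eq_add_intervalIntegral (x : ℝ) :
    Phi x = Phi 0 + ∫ t in (0)..x, gaussianPDFReal 0 1 t := by
  have hPhi (y : ℝ) : Phi y = ∫ t in Iic y, gaussianPDFReal 0 1 t := by
    rw [Phi, gaussianReal_apply_eq_integral _ one_ne_zero,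
      ENNReal.toReal_ofReal (integral_nonneg fun _ => gaussianPDFReal_nonneg _ _ _)]
  have hint := integrable_gaussianPDFReal 0 1
  rw [hPhi x, hPhi 0, ← intervalIntegral.integral_Iic_sub_Iic hint.integrableOn hint.integrableOn,
    add_sub_cancel]

lemma hasDerivAt_Phi (x : ℝ) : HasDerivAt Phi (gaussianPDFReal 0 1 x) x := by
  have hcont : Continuous (gaussianPDFReal 0 1) := by
    unfold gaussianPDFReal
    fun_prop
  rw [funext Phi_eq_add_intervalIntegral]
  exact (hcont.integral_hasStrictDerivAt 0 x).hasDerivAt.const_add _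

lemma abs_mul_gaussianPDFReal_le_one (x : ℝ) : |x * gaussianPDFReal 0 1 x| ≤ 1 := by
  have hpi : (√(2 * Real.pi))⁻¹ ≤ 1 :=
    inv_le_one_of_one_le₀ (Real.one_le_sqrt.2 (by linarith [Real.pi_gt_three]))
  have hx : |x| ≤ Real.exp (x ^ 2 / 2) := by
    nlinarith [Real.add_one_le_exp (x ^ 2 / 2), sq_nonneg (|x| - 1), sq_abs x]
  rw [abs_mul, abs_of_nonneg (gaussianPDFReal_nonneg _ _ _)]
  simp only [gaussianPDFReal, NNReal.coe_one, mul_one, sub_zero]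
  calc |x| * ((√(2 * Real.pi))⁻¹ * Real.exp (-x ^ 2 / 2))
      ≤ Real.exp (x ^ 2 / 2) * (1 * Real.exp (-x ^ 2 / 2)) := by gcongr
    _ = 1 := by rw [one_mul, ← Real.exp_add, ← add_div, add_neg_cancel, zero_div, Real.exp_zero]

lemma abs_Phi_mul_sub_Phi_le {a : ℝ} (ha : 0 < a) (x : ℝ) :
    |Phi (a * x) - Phi x| ≤ |Real.log a| := by
  -- In the variable `s = log a`, the derivative `e ^ s * x * φ (e ^ s * x)` is at most `1`.
  have hderiv (s : ℝ) : HasDerivAt (fun s => Phi (Real.exp s * x))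
      (Real.exp s * x * gaussianPDFReal 0 1 (Real.exp s * x)) s :=
    ((hasDerivAt_Phi _).comp s ((Real.hasDerivAt_exp s).mul_const x)).congr_deriv (mul_comm _ _)
  have hlip := convex_univ.norm_image_sub_le_of_norm_hasDerivWithin_le
    (fun s _ => (hderiv s).hasDerivWithinAt)
    (fun _ _ => abs_mul_gaussianPDFReal_le_one _) (mem_univ 0)
    (mem_univ (Real.log a))
  simpa [Real.exp_log ha] using hlip

lemma gaussianReal_real_Iic_eq_Phi {w : ℝ≥0} (hw : 0 < w) (x : ℝ) :
    (gaussianReal 0 w).real (Iic x) = Phi ((√w)⁻¹ * x) := by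
  have hlaw : (gaussianReal 0 1).map (√w * ·) = gaussianReal 0 w := by
    rw [(hasLaw_sqrt_mul_gaussianReal w).map_eq, Real.toNNReal_coe]
  have hpre : (√w * ·) ⁻¹' Iic x = Iic ((√w)⁻¹ * x) := by
    ext z
    exact (le_inv_mul_iff₀ (Real.sqrt_pos.2 (NNReal.coe_pos.2 hw))).symm
  rw [← hlaw, map_measureReal_apply (by fun_prop) measurableSet_Iic, hpre]
  rfl

lemma abs_log_le_of_quarter_le {w : ℝ} (hw : 1 / 4 ≤ w) : |Real.log w| ≤ 4 * |w - 1| := by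
  have hw₀ : 0 < w := by linarith
  have hneg : -Real.log w ≤ w⁻¹ - 1 :=
    (Real.log_inv w).symm.trans_le (Real.log_le_sub_one_of_pos (inv_pos.2 hw₀))
  have hinv : w⁻¹ - 1 ≤ 4 * |w - 1| := by
    rw [show w⁻¹ - 1 = (1 - w) / w by field_simp, div_le_iff₀ hw₀]
    nlinarith [neg_abs_le (w - 1), abs_nonneg (w - 1)]
  exact abs_le.2 ⟨by linarith, by
    linarith [Real.log_le_sub_one_of_pos hw₀, le_abs_self (w - 1), abs_nonneg (w - 1)]⟩

lemma abs_gaussianReal_real_Iic_sub_Phi_le (w : ℝ≥0) (x : ℝ) :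
    |(gaussianReal 0 w).real (Iic x) - Phi x| ≤ 2 * |(w : ℝ) - 1| := by
  rcases le_or_gt (1 / 4 : ℝ) w with hw | hw
  · have hw₀ : (0 : ℝ) < w := by linarith
    calc |(gaussianReal 0 w).real (Iic x) - Phi x|
        ≤ |Real.log (√w)⁻¹| := by
          rw [gaussianReal_real_Iic_eq_Phi (NNReal.coe_pos.1 hw₀)]
          exact abs_Phi_mul_sub_Phi_le (by positivity) x
      _ = |Real.log w| / 2 := by
          rw [Real.log_inv, abs_neg, Real.log_sqrt hw₀.le, abs_div, abs_two]
      _ ≤ 2 * |(w : ℝ) - 1| := by linarith [abs_log_le_of_quarter_le hw]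
  · calc |(gaussianReal 0 w).real (Iic x) - Phi x|
        ≤ 1 := abs_sub_le_of_nonneg_of_le measureReal_nonneg measureReal_le_one
          measureReal_nonneg measureReal_le_one
      _ ≤ 2 * |(w : ℝ) - 1| := by linarith [neg_abs_le ((w : ℝ) - 1)]

/-! ### Moments of the standard normal law -/

lemma integrable_pow_gaussianReal (n : ℕ) : Integrable (fun x => x ^ n) (gaussianReal 0 1) := by
  have h := (memLp_id_gaussianReal (μ := 0) (v := 1) n).integrable_norm_pow'
  exact (integrable_norm_iff (by fun_prop)).1 (by simpa only [id_eq, norm_pow] using h)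

lemma hasDerivAt_gaussianPDFReal (x : ℝ) :
    HasDerivAt (gaussianPDFReal 0 1) (-(x * gaussianPDFReal 0 1 x)) x := by
  have hpdf : gaussianPDFReal 0 1 = fun y => (√(2 * Real.pi))⁻¹ * Real.exp (-y ^ 2 / 2) := by
    ext y
    simp only [gaussianPDFReal, NNReal.coe_one, mul_one, sub_zero]
  have hexp : HasDerivAt (fun y : ℝ => -y ^ 2 / 2) (-x) x :=
    ((hasDerivAt_pow 2 x).fun_neg.div_const 2).congr_deriv (by ring)
  rw [hpdf]
  exact (hexp.exp.const_mul _).congr_deriv (by ring)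

lemma integral_pow_add_two_gaussianReal (n : ℕ) :
    ∫ x, x ^ (n + 2) ∂(gaussianReal 0 1) = (n + 1) * ∫ x, x ^ n ∂(gaussianReal 0 1) := by
  have hint (k : ℕ) := integrable_gaussianReal_iff.1 (integrable_pow_gaussianReal k)
  have hparts := integral_mul_deriv_eq_deriv_mul_of_integrable
    (u := fun x : ℝ => x ^ (n + 1)) (u' := fun x => (n + 1 : ℕ) * x ^ n)
    (fun x _ => hasDerivAt_pow (n + 1) x) (fun x _ => hasDerivAt_gaussianPDFReal x)
    ((hint (n + 2)).neg.congr (ae_of_all _ fun x => by simp; ring))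
    (((hint n).const_mul (n + 1 : ℕ)).congr (ae_of_all _ fun x => by simp; ring))
    ((hint (n + 1)).congr (ae_of_all _ fun x => by simp; ring))
  simp only [integral_gaussianReal_eq_integral_smul one_ne_zero, smul_eq_mul]
  calc ∫ x, gaussianPDFReal 0 1 x * x ^ (n + 2)
      = -∫ x, x ^ (n + 1) * -(x * gaussianPDFReal 0 1 x) := by
        rw [← integral_neg]
        exact integral_congr_ae (ae_of_all _ fun x => by ring)
    _ = ∫ x, (n + 1) * (gaussianPDFReal 0 1 x * x ^ n) := by
        rw [hparts, neg_neg]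
        exact integral_congr_ae (ae_of_all _ fun x => by push_cast; ring)
    _ = (n + 1) * ∫ x, gaussianPDFReal 0 1 x * x ^ n := integral_const_mul _ _

lemma integral_sq_gaussianReal : ∫ x, x ^ 2 ∂(gaussianReal 0 1) = 1 := by
  simpa using integral_pow_add_two_gaussianReal 0

lemma memLp_sq_gaussianReal : MemLp (fun x => x ^ 2) 2 (gaussianReal 0 1) := by
  rw [memLp_two_iff_integrable_sq (by fun_prop)]
  simpa only [← pow_mul] using integrable_pow_gaussianReal 4

lemma variance_sq_gaussianReal : Var[fun x => x ^ 2; gaussianReal 0 1] = 2 := by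
  have hfour : ∫ x, x ^ 4 ∂(gaussianReal 0 1) = 3 := by
    rw [integral_pow_add_two_gaussianReal 2, integral_sq_gaussianReal]
    norm_num
  simp only [variance_eq_sub memLp_sq_gaussianReal, Pi.pow_apply, ← pow_mul,
    integral_sq_gaussianReal, hfour]
  norm_num

/-! ### Berry–Esseen bound by conditioning on the first factors -/

lemma abs_measureReal_prod_sub_le {α β : Type*} [MeasurableSpace α] [MeasurableSpace β]
    {μ : Measure α} {ν : Measure β} [IsProbabilityMeasure μ] [IsProbabilityMeasure ν]
    {A : Set (α × β)} (hA : MeasurableSet A) (c : ℝ) :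
    |(μ.prod ν).real A - c| ≤ ∫ a, |ν.real (Prod.mk a ⁻¹' A) - c| ∂μ := by
  have hint : Integrable (fun a => ν.real (Prod.mk a ⁻¹' A)) μ :=
    Measure.integrable_measure_prodMk_left hA (measure_ne_top _ _)
  have hreal : (μ.prod ν).real A = ∫ a, ν.real (Prod.mk a ⁻¹' A) ∂μ := by
    rw [measureReal_def, Measure.prod_apply hA]
    exact (integral_toReal (measurable_measure_prodMk_left hA).aemeasurable
      (ae_of_all _ fun _ => measure_lt_top _ _)).symm
  calc |(μ.prod ν).real A - c|
      = |∫ a, (ν.real (Prod.mk a ⁻¹' A) - c) ∂μ| := by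
        rw [integral_sub hint (integrable_const c), hreal]
        simp
    _ ≤ ∫ a, |ν.real (Prod.mk a ⁻¹' A) - c| ∂μ := abs_integral_le_integral_abs

lemma integral_abs_sub_integral_le_sqrt_variance {Ω : Type*} [MeasurableSpace Ω] {P : Measure Ω}
    [IsProbabilityMeasure P] {X : Ω → ℝ} (hX : MemLp X 2 P) :
    ∫ ω, |X ω - P[X]| ∂P ≤ √Var[X; P] := by
  have hY : MemLp (fun ω => |X ω - P[X]|) 2 P := (hX.sub (memLp_const _)).abs
  have hvar := variance_eq_sub hY
  simp only [Pi.pow_apply, sq_abs, ← variance_eq_integral hX.aemeasurable] at hvar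
  exact Real.le_sqrt_of_sq_le (by linarith [variance_nonneg (fun ω => |X ω - P[X]|) P])

lemma hasLaw_sum_gaussianReal {Ω ι : Type*} [MeasurableSpace Ω] [Fintype ι] {P : Measure Ω}
    {X : ι → Ω → ℝ} {m : ι → ℝ} {v : ι → ℝ≥0} (hX : ∀ i, HasLaw (X i) (gaussianReal (m i) (v i)) P)
    (hind : iIndepFun X P) :
    HasLaw (∑ i, X i) (gaussianReal (∑ i, m i) (∑ i, v i)) P := by
  have hgauss := hind.hasGaussianLaw_sum fun i => (hX i).hasGaussianLaw
  have hmean : P[∑ i, X i] = ∑ i, m i := by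
    simp only [Finset.sum_apply]
    rw [integral_finsetSum _ fun i _ => (hX i).hasGaussianLaw.integrable]
    exact Finset.sum_congr rfl fun i _ => by rw [(hX i).integral_eq, integral_id_gaussianReal]
  have hvar : Var[∑ i, X i; P] = ∑ i, (v i : ℝ) := by
    rw [IndepFun.variance_sum (fun i _ => (hX i).hasGaussianLaw.memLp_two)
      fun i _ j _ hij => hind.indepFun hij]
    exact Finset.sum_congr rfl fun i _ => by rw [(hX i).variance_eq, variance_id_gaussianReal]
  refine ⟨hgauss.aemeasurable, ?_⟩
  rw [hgauss.map_eq_gaussianReal, hmean, hvar, ← NNReal.coe_sum, Real.toNNReal_coe]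

lemma hasLaw_sum_mul_gaussianReal {ι : Type*} [Fintype ι] (c : ι → ℝ) :
    HasLaw (fun h : ι → ℝ => ∑ i, c i * h i) (gaussianReal 0 (∑ i, c i ^ 2).toNNReal)
      (.pi fun _ => gaussianReal 0 1) := by
  have hlaw := hasLaw_sum_gaussianReal
    (fun i => gaussianReal_const_mul
      (measurePreserving_eval (fun _ : ι => gaussianReal 0 1) i).hasLaw (c i))
    (iIndepFun_pi (X := fun i x => c i * x) fun _ => by fun_prop)
  convert hlaw using 1
  · ext h
    simp only [Finset.sum_apply, Function.eval]
  · congr 1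
    · simp only [mul_zero, Finset.sum_const_zero]
    · rw [Real.toNNReal_sum_of_nonneg fun i _ => sq_nonneg _]
      exact Finset.sum_congr rfl fun i _ => by rw [mul_one, Real.toNNReal_of_nonneg (sq_nonneg _)]

/-- The mean `n⁻¹ ∑ g_j²`: the conditional variance of `√n` times the mean of the products
`g_j h_j`, given the first factors. -/
def meanSq {n : ℕ} (g : Fin n → ℝ) : ℝ := (n : ℝ)⁻¹ * ∑ j, g j ^ 2

lemma meanSq_nonneg {n : ℕ} (g : Fin n → ℝ) : 0 ≤ meanSq g :=
  mul_nonneg (by positivity) (Finset.sum_nonneg fun _ _ => sq_nonneg _)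

lemma memLp_sq_eval_gaussianReal {ι : Type*} [Fintype ι] (i : ι) :
    MemLp (fun g : ι → ℝ => g i ^ 2) 2 (.pi fun _ => gaussianReal 0 1) :=
  memLp_sq_gaussianReal.comp_measurePreserving
    (measurePreserving_eval (fun _ => gaussianReal 0 1) i)

lemma memLp_meanSq (n : ℕ) :
    MemLp (meanSq (n := n)) 2 (.pi fun _ => gaussianReal 0 1) :=
  (memLp_finsetSum _ fun j _ => memLp_sq_eval_gaussianReal j).const_mul _

lemma integral_meanSq {n : ℕ} (hn : 0 < n) :
    ∫ g : Fin n → ℝ, meanSq g ∂(.pi fun _ => gaussianReal 0 1) = 1 := by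
  have hcoord (j : Fin n) : ∫ g : Fin n → ℝ, g j ^ 2 ∂(.pi fun _ => gaussianReal 0 1) = 1 :=
    (integral_comp_eval (μ := fun _ : Fin n => gaussianReal 0 1) (f := fun x => x ^ 2)
      (by fun_prop)).trans integral_sq_gaussianReal
  simp only [meanSq]
  rw [integral_const_mul, integral_finsetSum _ fun j _ =>
    (memLp_sq_eval_gaussianReal j).integrable one_le_two]
  simp [hcoord, hn.ne']

lemma variance_meanSq (n : ℕ) :
    Var[meanSq (n := n); .pi fun _ => gaussianReal 0 1] = 2 / n := by
  have hsum : Var[fun g : Fin n → ℝ => ∑ j, g j ^ 2; .pi fun _ => gaussianReal 0 1] = n * 2 := by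
    have h := variance_sum_pi (μ := fun _ : Fin n => gaussianReal 0 1) (X := fun _ x => x ^ 2)
      fun _ => memLp_sq_gaussianReal
    simpa [Finset.sum_fn, variance_sq_gaussianReal] using h
  unfold meanSq
  rw [variance_const_mul, hsum]
  rcases eq_or_ne (n : ℝ) 0 with hn | hn
  · simp [hn]
  · field_simp

lemma integral_abs_meanSq_sub_one_le {n : ℕ} (hn : 0 < n) :
    ∫ g : Fin n → ℝ, |meanSq g - 1| ∂(.pi fun _ => gaussianReal 0 1) ≤ √(2 / n) := by
  simpa only [integral_meanSq hn, variance_meanSq] using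
    integral_abs_sub_integral_le_sqrt_variance (memLp_meanSq n)

lemma measureReal_sqrt_mul_meanProd_section {n : ℕ} (hn : 0 < n) (g : Fin n → ℝ) (x : ℝ) :
    (Measure.pi fun _ : Fin n => gaussianReal 0 1).real
      {h | √n * meanProd (fun j => (g j, h j)) ≤ x} =
      (gaussianReal 0 (meanSq g).toNNReal).real (Iic x) := by
  have hn' : (0 : ℝ) < n := Nat.cast_pos.2 hn
  have hsum (h : Fin n → ℝ) :
      √n * meanProd (fun j => (g j, h j)) = ∑ j, √n * (n : ℝ)⁻¹ * g j * h j := by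
    simp only [meanProd, mul_assoc, Finset.mul_sum]
  have hvar : ∑ j, (√n * (n : ℝ)⁻¹ * g j) ^ 2 = meanSq g := by
    simp only [meanSq, mul_pow, ← Finset.mul_sum, Real.sq_sqrt hn'.le]
    field_simp
  have hlaw := hasLaw_sum_mul_gaussianReal fun j => √n * (n : ℝ)⁻¹ * g j
  simp only [hvar, ← hsum] at hlaw
  exact hlaw.measureReal_eq measurableSet_Iic

theorem abs_measureReal_sqrt_mul_meanProd_sub_Phi_le {n : ℕ} (hn : 0 < n) (x : ℝ) :
    |(gaussianPairs n).real {p | √n * meanProd p ≤ x} - Phi x| ≤ 2 * √2 / √n := by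
  let A : Set ((Fin n → ℝ) × (Fin n → ℝ)) :=
    {q | √n * meanProd (fun j => (q.1 j, q.2 j)) ≤ x}
  have hA : MeasurableSet A := measurableSet_le (by fun_prop) (by fun_prop)
  have hsplit : (gaussianPairs n).real {p | √n * meanProd p ≤ x} =
      ((Measure.pi fun _ => gaussianReal 0 1).prod (Measure.pi fun _ => gaussianReal 0 1)).real A :=
    (measurePreserving_arrowProdEquivProdArrow ℝ ℝ (Fin n) (fun _ => gaussianReal 0 1)
      fun _ => gaussianReal 0 1).measureReal_preimage hA.nullMeasurableSet
  have hint : Integrable (fun g : Fin n → ℝ => |meanSq g - 1|) (.pi fun _ => gaussianReal 0 1) :=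
    (((memLp_meanSq n).integrable one_le_two).sub (integrable_const 1)).abs
  rw [hsplit]
  calc |((Measure.pi fun _ => gaussianReal 0 1).prod
          (Measure.pi fun _ => gaussianReal 0 1)).real A - Phi x|
      ≤ ∫ g : Fin n → ℝ, |(Measure.pi fun _ : Fin n => gaussianReal 0 1).real (Prod.mk g ⁻¹' A)
          - Phi x| ∂(.pi fun _ => gaussianReal 0 1) := abs_measureReal_prod_sub_le hA _
    _ ≤ ∫ g : Fin n → ℝ, 2 * |meanSq g - 1| ∂(.pi fun _ => gaussianReal 0 1) := by
        refine integral_mono_of_nonneg (ae_of_all _ fun g => abs_nonneg _) (hint.const_mul 2)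
          (ae_of_all _ fun g => ?_)
        simp only [A, preimage_ofPred_eq, measureReal_sqrt_mul_meanProd_section hn]
        simpa only [Real.coe_toNNReal _ (meanSq_nonneg g)] using
          abs_gaussianReal_real_Iic_sub_Phi_le (meanSq g).toNNReal x
    _ ≤ 2 * √(2 / n) := by
        rw [integral_const_mul]
        gcongr
        exact integral_abs_meanSq_sub_one_le hn
    _ = 2 * √2 / √n := by rw [Real.sqrt_div zero_le_two, mul_div_assoc]

theorem stmt8_general {H : Type*} [NormedAddCommGroup H] [InnerProductSpace ℝ H]
    [CompleteSpace H] [MeasurableSpace H] [BorelSpace H] {S : CovOp H} {r : ℕ} {θ : H}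
    {ν : Measure H} {n : ℕ} (u : H) (hθ : ‖θ‖ = 1) (hP : S.P r θ = θ)
    (hν : IsGaussian ν S.toCLM) (hn : 1 ≤ n) :
    (∀ t : ℝ, Real.log 2 ≤ t →
        1 - Real.exp (-t) ≤ (Measure.pi fun _ : Fin n => ν).real
          {x | |⟪S.L r θ (sampleCov x - S.toCLM) θ, u⟫| ≤
            8 * √(S.sigmaSq r u) * max √(t / n) (t / n)}) ∧
      (0 < S.sigmaSq r u → ∀ x : ℝ,
        |(Measure.pi fun _ : Fin n => ν).real
            {y | √n * ⟪S.L r θ (sampleCov y - S.toCLM) θ, u⟫ / √(S.sigmaSq r u) ≤ x} - Phi x| ≤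
          2 * √2 / √n) := by
  have htransfer {p : ℝ → Prop} (hp : MeasurableSet {z | p z}) :
      (Measure.pi fun _ : Fin n => ν).real
          {x | p ⟪S.L r θ (sampleCov x - S.toCLM) θ, u⟫} =
        (gaussianPairs n).real {q | p (√(S.sigmaSq r u) * meanProd q)} :=
    congrArg ENNReal.toReal ((CovOp.identDistrib_inner_L hθ hP hν n u).measure_mem_eq hp)
  refine ⟨fun t ht => ?_, fun hσ x => ?_⟩
  · rw [htransfer (p := fun z => |z| ≤ _) (measurableSet_le (by fun_prop) measurable_const)]
    refine (one_sub_exp_neg_le_measureReal_meanProd hn ht).trans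
      (measureReal_mono fun q (hq : |meanProd q| ≤ _) => ?_)
    rw [mem_ofPred_eq, abs_mul, abs_of_nonneg (Real.sqrt_nonneg _), mul_comm 8, mul_assoc]
    gcongr
  · have hcancel (z : ℝ) : √n * (√(S.sigmaSq r u) * z) / √(S.sigmaSq r u) = √n * z := by
      have := (Real.sqrt_pos.2 hσ).ne'
      field_simp
    rw [htransfer (p := fun z => √n * z / _ ≤ x) (measurableSet_le (by fun_prop) (by fun_prop))]
    simpa only [hcancel] using abs_measureReal_sqrt_mul_meanProd_sub_Phi_le hn x

/-- **Lemma 4.2.** For all `t ≥ 1`, with probability at least `1 - e^{-t}`,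
`|⟨L_r(E)θ_r, u⟩| ≤ C σ_r(Σ;u)(√(t/n) ∨ t/n)`; moreover, if `σ_r(Σ;u) > 0`,
`sup_x |P(√n⟨L_r(E)θ_r, u⟩/σ_r(Σ;u) ≤ x) - Φ(x)| ≤ C'/√n`. -/
theorem stmt8 :
    ∃ C : ℝ, 0 < C ∧ ∃ C' : ℝ, 0 < C' ∧
      ∀ (H : Type) (_ : NormedAddCommGroup H),
        ∀ (_ : InnerProductSpace ℝ H) (_ : CompleteSpace H)
          (_ : MeasurableSpace H) (_ : BorelSpace H)
          (S : CovOp H) (r : ℕ) (θ : H) (ν : Measure H) (n : ℕ) (u : H),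
          S.SimpleVec r θ → IsGaussian ν S.toCLM → 1 ≤ n →
          (∀ t : ℝ, 1 ≤ t →
              1 - Real.exp (-t) ≤
                ((Measure.pi fun _ : Fin n => ν)
                  {x | |⟪S.L r θ (sampleCov x - S.toCLM) θ, u⟫| ≤
                      C * Real.sqrt (S.sigmaSq r u) *
                        max (Real.sqrt (t / n)) (t / n)}).toReal) ∧
            (0 < S.sigmaSq r u →
              ∀ x : ℝ,
                |((Measure.pi fun _ : Fin n => ν)
                    {y | Real.sqrt n * ⟪S.L r θ (sampleCov y - S.toCLM) θ, u⟫ /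
                        Real.sqrt (S.sigmaSq r u) ≤ x}).toReal - Phi x| ≤
                  C' / Real.sqrt n) := by
  refine ⟨8, by norm_num, 2 * √2, by positivity, ?_⟩
  intro H _ _ _ _ _ S r θ ν n u hθ hν hn
  have hmain := stmt8_general u hθ.1 hθ.P_apply_self hν hn
  exact ⟨fun t ht => hmain.1 t ((Real.log_two_lt_d9.trans (by norm_num)).le.trans ht), hmain.2⟩

end KLN
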